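/- arXiv:2307.05608 — 2 statements merged into one kernel-verified Lean document; each statement's English description precedes it below -/
import Mathlib

section
/- Let ε > 0 and let P and Q be probability measures on a measurable space X with P absolutely continuous with respect to Q. Let 𝔻 be the probability measure on X × {0,1} defined by 𝔻 = (e^ε/(1+e^ε))·(Q ⊗ δ_0) + (1/(1+e^ε))·(P ⊗ δ_1), i.e., (X,Y) ∼ 𝔻 is a sample from Q labeled 0 with weight e^ε/(1+e^ε) and a sample from P labeled 1 with weight 1/(1+e^ε). Then H_ε(P‖Q) = (1+e^ε)·sup_{g : X → {0,1} measurable} 𝔻({(x,y) : g(x) = y}) − e^ε. -/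
open MeasureTheory

/-- Hockey-stick divergence of order `e^ε`:
`H_ε(P‖Q) = ∫ max{0, dP/dQ − e^ε} dQ`. -/
noncomputable def hockeyStickDiv {X : Type*} [MeasurableSpace X]
    (ε : ℝ) (P Q : Measure X) : ℝ :=
  ∫ x, max 0 ((P.rnDeriv Q x).toReal - Real.exp ε) ∂Q

/-- The labeled mixture `𝔻 = (e^ε/(1+e^ε))·(Q ⊗ δ_false) + (1/(1+e^ε))·(P ⊗ δ_true)`
on `X × Bool`, where `false` plays the role of the label `0` and `true` of `1`. -/
noncomputable def labeledMixture {X : Type*} [MeasurableSpace X]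
    (ε : ℝ) (P Q : Measure X) : Measure (X × Bool) :=
  ENNReal.ofReal (Real.exp ε / (1 + Real.exp ε)) • Q.prod (Measure.dirac false)
    + ENNReal.ofReal (1 / (1 + Real.exp ε)) • P.prod (Measure.dirac true)

lemma labeledMixture_acc {X : Type*} [MeasurableSpace X]
    (ε : ℝ) (P Q : Measure X)
    [IsProbabilityMeasure P] [IsProbabilityMeasure Q] (hPQ : P ≪ Q)
    (g : X → Bool) (hg : Measurable g) :
    (labeledMixture ε P Q {p : X × Bool | g p.1 = p.2}).toReal =
      ((∫ x in g ⁻¹' {true}, ((P.rnDeriv Q x).toReal - Real.exp ε) ∂Q) + Real.exp ε)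
        / (1 + Real.exp ε) := by
  have hpos : 0 < 1 + Real.exp ε := by positivity
  have hA : MeasurableSet (g ⁻¹' {true}) := hg (measurableSet_singleton _)
  have hS : MeasurableSet {p : X × Bool | g p.1 = p.2} :=
    measurableSet_eq_fun (hg.comp measurable_fst) measurable_snd
  have h0 : (Q.prod (Measure.dirac false)) {p : X × Bool | g p.1 = p.2}
      = Q (g ⁻¹' {true})ᶜ := by
    rw [Measure.prod_dirac, Measure.map_apply (by fun_prop) hS]
    congr 1
    ext x
    simp
  have h1 : (P.prod (Measure.dirac true)) {p : X × Bool | g p.1 = p.2}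
      = P (g ⁻¹' {true}) := by
    rw [Measure.prod_dirac, Measure.map_apply (by fun_prop) hS]
    congr 1
  have hint : ∫ x in g ⁻¹' {true}, ((P.rnDeriv Q x).toReal - Real.exp ε) ∂Q
      = P.real (g ⁻¹' {true}) - Real.exp ε * Q.real (g ⁻¹' {true}) := by
    rw [integral_sub Measure.integrable_toReal_rnDeriv.integrableOn (integrable_const _),
      Measure.setIntegral_toReal_rnDeriv hPQ]
    simp [mul_comm]
  have hc : Q.real (g ⁻¹' {true})ᶜ = 1 - Q.real (g ⁻¹' {true}) := probReal_compl_eq_one_sub hA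
  rw [hint, labeledMixture, Measure.add_apply, Measure.smul_apply, Measure.smul_apply, h0, h1,
    smul_eq_mul, smul_eq_mul, ENNReal.toReal_add (by finiteness) (by finiteness),
    ENNReal.toReal_mul, ENNReal.toReal_mul, ENNReal.toReal_ofReal (by positivity),
    ENNReal.toReal_ofReal (by positivity), ← measureReal_def, ← measureReal_def, hc]
  field_simp
  ring

theorem hockey_stick_as_classification {X : Type*} [MeasurableSpace X]
    (ε : ℝ) (hε : 0 < ε) (P Q : Measure X)
    [IsProbabilityMeasure P] [IsProbabilityMeasure Q] (hPQ : P ≪ Q) :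
    hockeyStickDiv ε P Q =
      (1 + Real.exp ε) *
        (⨆ g : {g : X → Bool // Measurable g},
          (labeledMixture ε P Q {p : X × Bool | g.1 p.1 = p.2}).toReal)
        - Real.exp ε := by
  have hpos : 0 < 1 + Real.exp ε := by positivity
  have hi : Integrable (fun x => (P.rnDeriv Q x).toReal - Real.exp ε) Q :=
    Measure.integrable_toReal_rnDeriv.sub (integrable_const _)
  have hm : Integrable (fun x => max 0 ((P.rnDeriv Q x).toReal - Real.exp ε)) Q :=
    (integrable_zero _ _ _).sup hi
  have hsup : IsGreatest (Set.range fun g : {g : X → Bool // Measurable g} =>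
      (labeledMixture ε P Q {p : X × Bool | g.1 p.1 = p.2}).toReal)
      ((hockeyStickDiv ε P Q + Real.exp ε) / (1 + Real.exp ε)) := by
    constructor
    · have hA : MeasurableSet {x | 0 < (P.rnDeriv Q x).toReal - Real.exp ε} :=
        measurableSet_lt measurable_const
          ((Measure.measurable_rnDeriv P Q).ennreal_toReal.sub_const _)
      classical
      have hg : Measurable (fun x => decide (0 < (P.rnDeriv Q x).toReal - Real.exp ε)) :=
        measurable_to_bool (by
          convert hA using 1
          ext x
          simp)
      refine ⟨⟨_, hg⟩, ?_⟩
      simp only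
      rw [labeledMixture_acc ε P Q hPQ _ hg]
      congr 2
      have : (fun x => decide (0 < (P.rnDeriv Q x).toReal - Real.exp ε)) ⁻¹' {true}
          = {x | 0 < (P.rnDeriv Q x).toReal - Real.exp ε} := by
        ext x
        simp
      rw [this, hockeyStickDiv, ← integral_indicator hA]
      congr 1
      ext x
      by_cases h : 0 < (P.rnDeriv Q x).toReal - Real.exp ε
      · rw [Set.indicator_of_mem (by exact h), max_eq_right h.le]
      · rw [Set.indicator_of_notMem (by exact h), max_eq_left (not_lt.mp h)]
    · rintro _ ⟨⟨g, hg⟩, rfl⟩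
      simp only
      rw [labeledMixture_acc ε P Q hPQ _ hg]
      gcongr
      calc _ ≤ ∫ x in g ⁻¹' {true}, max 0 ((P.rnDeriv Q x).toReal - Real.exp ε) ∂Q :=
            integral_mono hi.integrableOn hm.integrableOn (fun x => le_max_right _ _)
        _ ≤ _ := setIntegral_le_integral hm (Filter.Eventually.of_forall fun x => le_max_left _ _)
  have := hsup.csSup_eq
  rw [iSup, this]
  field_simp
  ring
end

section
/- Let ε > 0, δ ≥ 0, and let P and Q be probability measures on a measurable space X such that P is absolutely continuous with respect to Q and, for every measurable set A ⊆ X, P(A) ≤ e^ε·Q(A) + δ and Q(A) ≤ e^ε·P(A) + δ. Then ∫ |dP/dQ − 1| dQ ≤ e^ε − 1 + (1 + e^{−ε})·δ, where dP/dQ is the Radon–Nikodym derivative. -/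
open MeasureTheory

theorem total_variation_le_of_approx_dp
    {X : Type*} [MeasurableSpace X]
    (ε δ : ℝ) (hε : 0 < ε) (hδ : 0 ≤ δ)
    (P Q : Measure X) [IsProbabilityMeasure P] [IsProbabilityMeasure Q]
    (hPQ : P ≪ Q)
    (hDP₁ : ∀ A : Set X, MeasurableSet A →
      (P A).toReal ≤ Real.exp ε * (Q A).toReal + δ)
    (hDP₂ : ∀ A : Set X, MeasurableSet A →
      (Q A).toReal ≤ Real.exp ε * (P A).toReal + δ) :
    (∫ x, |(P.rnDeriv Q x).toReal - 1| ∂Q) ≤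
      Real.exp ε - 1 + (1 + Real.exp (-ε)) * δ := by
  set f : X → ℝ := fun x => (P.rnDeriv Q x).toReal with hf
  have hfm : Measurable f := (Measure.measurable_rnDeriv P Q).ennreal_toReal
  have hfi : Integrable f Q := Measure.integrable_toReal_rnDeriv
  set A : Set X := {x | 1 ≤ f x} with hA
  have hAm : MeasurableSet A := measurableSet_le measurable_const hfm
  have hgi : Integrable (fun x => f x - 1) Q := hfi.sub (integrable_const 1)
  have hS : ∀ s : Set X, ∫ x in s, (f x - 1) ∂Q = P.real s - Q.real s := by
    intro s
    rw [integral_sub hfi.integrableOn (integrable_const 1).integrableOn,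
      Measure.setIntegral_toReal_rnDeriv hPQ]
    simp
  have h1 : ∫ x in A, |f x - 1| ∂Q = P.real A - Q.real A := by
    rw [← hS A]
    refine setIntegral_congr_fun hAm fun x hx => ?_
    have hx' : 1 ≤ f x := hx
    exact abs_of_nonneg (by linarith)
  have h2 : ∫ x in Aᶜ, |f x - 1| ∂Q = -(P.real Aᶜ - Q.real Aᶜ) := by
    rw [← hS Aᶜ, ← integral_neg]
    refine setIntegral_congr_fun hAm.compl fun x hx => ?_
    have hx' : ¬ 1 ≤ f x := hx
    exact abs_of_nonpos (by linarith)
  have hsum := integral_add_compl hAm hgi.abs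
  have hPc : P.real Aᶜ = 1 - P.real A := probReal_compl_eq_one_sub hAm
  have hQc : Q.real Aᶜ = 1 - Q.real A := probReal_compl_eq_one_sub hAm
  have d1 : P.real A ≤ Real.exp ε * Q.real A + δ := hDP₁ A hAm
  have d2 : Q.real Aᶜ ≤ Real.exp ε * P.real Aᶜ + δ := hDP₂ Aᶜ hAm.compl
  rw [h1, h2, hPc, hQc] at hsum
  rw [hPc, hQc] at d2
  change ∫ x, |f x - 1| ∂Q ≤ _
  rw [← hsum, Real.exp_neg]
  have he : 1 < Real.exp ε := Real.one_lt_exp_iff.mpr hε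
  generalize Real.exp ε = e at *
  generalize P.real A = p at *
  generalize Q.real A = q at *
  have k : (e + 1) * (p - q) ≤ e - 1 + 2 * δ := by linarith
  have k2 : 4 ≤ (1 + e⁻¹) * (e + 1) := by
    have : (1 + e⁻¹) * (e + 1) - 4 = (e - 1) ^ 2 / e := by
      field_simp
      ring
    have : 0 ≤ (e - 1) ^ 2 / e := by positivity
    linarith
  have k3 : 4 * δ ≤ (1 + e⁻¹) * (e + 1) * δ := mul_le_mul_of_nonneg_right k2 hδ
  refine le_of_mul_le_mul_left ?_ (by linarith : (0 : ℝ) < e + 1)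
  nlinarith [sq_nonneg (e - 1)]
end
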